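/- arXiv:1407.0139 — 7 statements merged into one kernel-verified Lean document; each statement's English description precedes it below -/
import Mathlib

section
/- Let G be a finite connected bridgeless simple graph with edge set E, and let S ⊆ E with |S| ≥ 2. Then S is a pairwise-disconnecting set of G if and only if the graph obtained from G by deleting all edges of S has exactly |S| connected components. -/
open LaurentPolynomial Finset

/-- `S` is a pairwise-disconnecting set of `G`: a set of at least two edges of `G` such that
deleting any two distinct edges of `S` disconnects the graph. -/
def IsPDSet {V : Type*} (G : SimpleGraph V) (S : Finset (Sym2 V)) : Prop :=
  ↑S ⊆ G.edgeSet ∧ 2 ≤ S.card ∧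
    ∀ e ∈ S, ∀ f ∈ S, e ≠ f → ¬ (G.deleteEdges {e, f}).Connected

/-- A pairwise-disconnecting set is maximal if no pairwise-disconnecting set contains it
as a proper subset. -/
def IsMaxPDSet {V : Type*} (G : SimpleGraph V) (S : Finset (Sym2 V)) : Prop :=
  IsPDSet G S ∧ ∀ S' : Finset (Sym2 V), IsPDSet G S' → S ⊆ S' → S' = S

theorem reach_aux {V : Type*} (H : SimpleGraph V) (u v x y : V) (h : H.Reachable x y) :
    (H.deleteEdges {s(u, v)}).Reachable x y ∨
      (((H.deleteEdges {s(u, v)}).Reachable x u ∨ (H.deleteEdges {s(u, v)}).Reachable x v) ∧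
       ((H.deleteEdges {s(u, v)}).Reachable y u ∨ (H.deleteEdges {s(u, v)}).Reachable y v)) := by
  obtain ⟨p⟩ := h
  induction p with
  | nil => exact Or.inl .rfl
  | @cons a b c hab p ih =>
    by_cases he : s(a, b) = s(u, v)
    · have ha : (H.deleteEdges {s(u, v)}).Reachable a u ∨
          (H.deleteEdges {s(u, v)}).Reachable a v := by
        rcases Sym2.eq_iff.1 he with ⟨rfl, rfl⟩ | ⟨rfl, rfl⟩
        · exact Or.inl .rfl
        · exact Or.inr .rfl
      have hb : (H.deleteEdges {s(u, v)}).Reachable b u ∨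
          (H.deleteEdges {s(u, v)}).Reachable b v := by
        rcases Sym2.eq_iff.1 he with ⟨rfl, rfl⟩ | ⟨rfl, rfl⟩
        · exact Or.inr .rfl
        · exact Or.inl .rfl
      right
      refine ⟨ha, ?_⟩
      rcases ih with h | h
      · exact hb.imp h.symm.trans h.symm.trans
      · exact h.2
    · have hr : (H.deleteEdges {s(u, v)}).Reachable a b :=
        (SimpleGraph.deleteEdges_adj.2 ⟨hab, he⟩).reachable
      rcases ih with h | h
      · exact Or.inl (hr.trans h)
      · exact Or.inr ⟨h.1.imp hr.trans hr.trans, h.2⟩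

theorem card_delete_le {V : Type*} [Finite V] (H : SimpleGraph V) (e : Sym2 V) :
    Nat.card (H.deleteEdges {e}).ConnectedComponent ≤ Nat.card H.ConnectedComponent + 1 := by
  classical
  induction e with
  | h u v =>
  rw [← Finite.card_option]
  have hle : H.deleteEdges {s(u, v)} ≤ H := SimpleGraph.deleteEdges_le _
  refine Nat.card_le_card_of_injective
    (fun c : (H.deleteEdges {s(u, v)}).ConnectedComponent =>
      if c = (H.deleteEdges {s(u, v)}).connectedComponentMk u then none
      else some (c.map (SimpleGraph.Hom.ofLE hle))) ?_
  intro c d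
  refine SimpleGraph.ConnectedComponent.ind₂ (fun x y => ?_) c d
  simp only [SimpleGraph.ConnectedComponent.eq]
  intro h
  split_ifs at h with h1 h2 h2
  · exact h1.trans h2.symm
  · have h3 : H.Reachable x y := by simpa using h
    rcases reach_aux H u v x y h3 with h | ⟨ha, hb⟩
    · exact h
    · exact (ha.resolve_left h1).trans (hb.resolve_left h2).symm

theorem card_delete_bridge {V : Type*} [Finite V] (H : SimpleGraph V) (e : Sym2 V)
    (he : e ∈ H.edgeSet) (hb : H.IsBridge e) :
    Nat.card (H.deleteEdges {e}).ConnectedComponent = Nat.card H.ConnectedComponent + 1 := by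
  refine le_antisymm (card_delete_le H e) ?_
  induction e with
  | h u v =>
  have hle : H.deleteEdges {s(u, v)} ≤ H := SimpleGraph.deleteEdges_le _
  have hs := SimpleGraph.ConnectedComponent.surjective_map_ofLE hle
  by_contra hlt
  have hcard := Nat.card_le_card_of_surjective _ hs
  have hbij := (Nat.bijective_iff_surjective_and_card _).2 ⟨hs, by omega⟩
  have := @hbij.1 (SimpleGraph.connectedComponentMk _ u) (SimpleGraph.connectedComponentMk _ v)
    (by simpa using SimpleGraph.Adj.reachable he)
  exact SimpleGraph.isBridge_iff.1 hb (SimpleGraph.ConnectedComponent.eq.1 this)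

theorem delete_insert {V : Type*} [DecidableEq V] (H : SimpleGraph V) (e : Sym2 V)
    (T : Finset (Sym2 V)) :
    H.deleteEdges (↑(insert e T) : Set (Sym2 V)) = (H.deleteEdges ↑T).deleteEdges {e} := by
  rw [SimpleGraph.deleteEdges_deleteEdges, Finset.coe_insert, Set.union_singleton]

theorem card_deletes_le {V : Type*} [Finite V] [DecidableEq V] (H : SimpleGraph V)
    (T : Finset (Sym2 V)) :
    Nat.card (H.deleteEdges (↑T : Set (Sym2 V))).ConnectedComponent ≤
      Nat.card H.ConnectedComponent + T.card := by
  induction T using Finset.induction_on with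
  | empty => simp
  | insert e T he ih =>
    rw [delete_insert, Finset.card_insert_of_notMem he]
    have := card_delete_le (H.deleteEdges (↑T : Set (Sym2 V))) e
    omega

theorem card_deletes_bridge {V : Type*} [Finite V] [DecidableEq V] (H : SimpleGraph V)
    (T : Finset (Sym2 V)) (hT : ∀ e ∈ T, e ∈ H.edgeSet ∧ H.IsBridge e) :
    Nat.card (H.deleteEdges (↑T : Set (Sym2 V))).ConnectedComponent =
      Nat.card H.ConnectedComponent + T.card := by
  induction T using Finset.induction_on with
  | empty => simp
  | insert e T he ih =>
    rw [delete_insert, Finset.card_insert_of_notMem he]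
    have h1 := hT e (Finset.mem_insert_self _ _)
    rw [card_delete_bridge _ e (by simpa [SimpleGraph.edgeSet_deleteEdges] using ⟨h1.1, he⟩)
      (h1.2.anti (SimpleGraph.deleteEdges_le _)),
      ih fun f hf => hT f (Finset.mem_insert_of_mem hf)]
    omega

theorem card_conn {V : Type*} (H : SimpleGraph V) (h : H.Connected) :
    Nat.card H.ConnectedComponent = 1 := by
  have := h.nonempty
  have := h.preconnected.subsingleton_connectedComponent
  exact Nat.card_eq_one_iff_unique.2 ⟨this, inferInstance⟩

theorem conn_delete {V : Type*} (H : SimpleGraph V) (h : H.Connected) (e : Sym2 V)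
    (he : ¬ H.IsBridge e) : (H.deleteEdges {e}).Connected := by
  induction e with
  | h u v => exact h.connected_delete_edge_of_not_isBridge he

/-- For a finite connected bridgeless simple graph `G` and `S ⊆ E` with `|S| ≥ 2`,
`S` is a pairwise-disconnecting set iff deleting all edges of `S` leaves exactly `|S|`
connected components. -/
theorem isPDSet_iff_card_components {V : Type*} [Fintype V] [DecidableEq V]
    (G : SimpleGraph V) (hconn : G.Connected) (hbl : ∀ e : Sym2 V, ¬ G.IsBridge e)
    (S : Finset (Sym2 V)) (hS : ↑S ⊆ G.edgeSet) (h2 : 2 ≤ S.card) :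
    IsPDSet G S ↔ Nat.card (G.deleteEdges (↑S : Set (Sym2 V))).ConnectedComponent = S.card := by
  constructor
  · rintro ⟨-, -, h⟩
    obtain ⟨e, he⟩ : S.Nonempty := Finset.card_pos.1 (by omega)
    have hc := conn_delete G hconn e (hbl e)
    have key := card_deletes_bridge (G.deleteEdges {e}) (S.erase e) (by
      intro f hf
      obtain ⟨hfe, hfS⟩ := Finset.mem_erase.1 hf
      refine ⟨by simpa [SimpleGraph.edgeSet_deleteEdges] using ⟨hS hfS, hfe⟩, ?_⟩
      by_contra hb
      have := conn_delete _ hc f hb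
      rw [SimpleGraph.deleteEdges_deleteEdges, Set.singleton_union] at this
      exact h e he f hfS hfe.symm this)
    rw [SimpleGraph.deleteEdges_deleteEdges, Set.singleton_union, ← Finset.coe_insert,
      Finset.insert_erase he, card_conn _ hc, Finset.card_erase_of_mem he] at key
    omega
  · intro h
    refine ⟨hS, h2, fun e he f hf hef hc => ?_⟩
    have hf' : f ∈ S.erase e := Finset.mem_erase.2 ⟨hef.symm, hf⟩
    have key := card_deletes_le (G.deleteEdges {e, f}) ((S.erase e).erase f)
    rw [SimpleGraph.deleteEdges_deleteEdges, Set.insert_union, Set.singleton_union,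
      ← Finset.coe_insert, Finset.insert_erase hf', ← Finset.coe_insert,
      Finset.insert_erase he, card_conn _ hc, Finset.card_erase_of_mem hf',
      Finset.card_erase_of_mem he] at key
    omega
end

section
/- Let G be a finite connected bridgeless simple graph with edge set E, and let S ⊆ E be a pairwise-disconnecting set of G. Then there exists a cycle of G that contains every edge of S. -/
open LaurentPolynomial Finset

/-- Every pairwise-disconnecting set of a finite connected bridgeless simple graph lies
on a single cycle of the graph. -/
theorem isPDSet_subset_cycle {V : Type*} [Fintype V] [DecidableEq V]
    (G : SimpleGraph V) (hconn : G.Connected) (hbl : ∀ e : Sym2 V, ¬ G.IsBridge e)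
    (S : Finset (Sym2 V)) (hS : IsPDSet G S) :
    ∃ (u : V) (c : G.Walk u u), c.IsCycle ∧ ∀ e ∈ S, e ∈ c.edges := by
  obtain ⟨hSE, hcard, hdis⟩ := hS
  obtain ⟨e, he⟩ : S.Nonempty := Finset.card_pos.mp (by omega)
  have hcyc := hbl e
  rw [SimpleGraph.isBridge_iff_forall_cycle_notMem (hSE he)] at hcyc
  push Not at hcyc
  obtain ⟨u, c, hc, hec⟩ := hcyc
  refine ⟨u, c, hc, fun f hf => ?_⟩
  by_contra hfc
  have hne : f ≠ e := by
    rintro rfl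
    exact hfc hec
  apply hdis f hf e he hne
  have h1 : (G.deleteEdges {f}).Connected := by
    have := hbl f
    induction f with
    | h x y => exact hconn.connected_delete_edge_of_not_isBridge this
  have hp : ∀ e' ∈ c.edges, e' ∈ (G.deleteEdges {f}).edgeSet := by
    intro e' he'
    rw [SimpleGraph.edgeSet_deleteEdges]
    exact ⟨c.edges_subset_edgeSet he', fun h => hfc (h ▸ he')⟩
  have h2 : ¬ (G.deleteEdges {f}).IsBridge e := fun hb =>
    hb.notMem_edges_of_isCycle (hc.transfer hp) (by simpa using hec)
  have h3 : ((G.deleteEdges {f}).deleteEdges {e}).Connected := by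
    clear hp
    induction e with
    | h x y => exact h1.connected_delete_edge_of_not_isBridge h2
  rwa [SimpleGraph.deleteEdges_deleteEdges, Set.singleton_union] at h3
end

section
/- Let G be a finite connected bridgeless simple graph and let S be a pairwise-disconnecting set of G. Then there exists a unique maximal pairwise-disconnecting set S_M of G with S ⊆ S_M. -/
open LaurentPolynomial Finset

theorem pd_const {V : Type*} (G : SimpleGraph V) (s : Set (Sym2 V)) (p : V → Prop)
    (hp : ∀ x y, G.Adj x y → s(x, y) ∉ s → (p x ↔ p y))
    (hc : (G.deleteEdges s).Connected) (u v : V) : p u ↔ p v := by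
  obtain ⟨w⟩ := hc.preconnected u v
  induction w with
  | nil => rfl
  | cons h w ih =>
    rw [SimpleGraph.deleteEdges_adj] at h
    exact (hp _ _ h.1 h.2).trans ih

theorem pd_cut {V : Type*} [Nonempty V] (G : SimpleGraph V) (s : Set (Sym2 V))
    (hc : ¬ (G.deleteEdges s).Connected) :
    ∃ p : V → Prop, (∀ x y, G.Adj x y → s(x, y) ∉ s → (p x ↔ p y)) ∧
      ∃ u v, ¬ (p u ↔ p v) := by
  rw [SimpleGraph.connected_iff] at hc
  have h : ¬ (G.deleteEdges s).Preconnected := fun h => hc ⟨h, inferInstance⟩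
  unfold SimpleGraph.Preconnected at h
  push Not at h
  obtain ⟨u, v, huv⟩ := h
  refine ⟨fun x => (G.deleteEdges s).Reachable u x, ?_, u, v, ?_⟩
  · intro x y hxy hs
    have ha : (G.deleteEdges s).Adj x y := by
      rw [SimpleGraph.deleteEdges_adj]; exact ⟨hxy, hs⟩
    exact ⟨fun h => h.trans ha.reachable, fun h => h.trans ha.symm.reachable⟩
  · intro h
    exact huv (h.1 (SimpleGraph.Reachable.refl u))

theorem pd_del {V : Type*} (G : SimpleGraph V) (hconn : G.Connected)
    (hbl : ∀ e : Sym2 V, ¬ G.IsBridge e) (e : Sym2 V) : (G.deleteEdges {e}).Connected := by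
  have := hconn.nonempty
  by_contra hc
  obtain ⟨p, hp, u, v, huv⟩ := pd_cut G {e} hc
  induction e using Sym2.ind with
  | _ a b =>
  have hr := hbl s(a, b)
  rw [SimpleGraph.isBridge_iff, not_not] at hr
  have hab : p a ↔ p b := by
    obtain ⟨w⟩ := hr
    clear huv
    clear hc
    have key : ∀ c d, (G.deleteEdges {s(a, b)}).Walk c d → (p c ↔ p d) := by
      intro c d w
      induction w with
      | nil => rfl
      | cons h w ih =>
        rw [SimpleGraph.deleteEdges_adj] at h
        exact (hp _ _ h.1 h.2).trans ih
    exact key _ _ w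
  apply huv
  apply pd_const G ∅ p _ (by simpa using hconn)
  intro x y hxy _
  by_cases h : s(x, y) = s(a, b)
  · rw [Sym2.eq_iff] at h
    rcases h with ⟨rfl, rfl⟩ | ⟨rfl, rfl⟩
    · exact hab
    · exact hab.symm
  · exact hp x y hxy h

/-- In a cut inside `{e, s(a,b)}`, the edge `s(a,b)` crosses. -/
theorem pd_cross {V : Type*} (G : SimpleGraph V) (hconn : G.Connected)
    (hbl : ∀ e : Sym2 V, ¬ G.IsBridge e) (e : Sym2 V) (a b : V) (p : V → Prop)
    (hp : ∀ x y, G.Adj x y → s(x, y) ∉ ({e, s(a, b)} : Set (Sym2 V)) → (p x ↔ p y))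
    (hn : ∃ u v, ¬ (p u ↔ p v)) : ¬ (p a ↔ p b) := by
  intro hab
  obtain ⟨u, v, huv⟩ := hn
  apply huv
  apply pd_const G {e} p _ (pd_del G hconn hbl e)
  intro x y hxy hs
  by_cases h : s(x, y) = s(a, b)
  · rw [Sym2.eq_iff] at h
    rcases h with ⟨rfl, rfl⟩ | ⟨rfl, rfl⟩
    · exact hab
    · exact hab.symm
  · refine hp x y hxy ?_
    simp only [Set.mem_insert_iff, Set.mem_singleton_iff] at hs ⊢
    tauto

theorem pd_trans {V : Type*} (G : SimpleGraph V) (hconn : G.Connected)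
    (hbl : ∀ e : Sym2 V, ¬ G.IsBridge e) (e f g : Sym2 V) (he : e ∈ G.edgeSet)
    (hef : e ≠ f) (heg : e ≠ g)
    (h1 : ¬ (G.deleteEdges {e, f}).Connected) (h2 : ¬ (G.deleteEdges {f, g}).Connected) :
    ¬ (G.deleteEdges {e, g}).Connected := by
  have := hconn.nonempty
  obtain ⟨p, hp, hpn⟩ := pd_cut G _ h1
  obtain ⟨q, hq, hqn⟩ := pd_cut G _ h2
  intro hc
  induction e using Sym2.ind with
  | _ a b =>
  induction f using Sym2.ind with
  | _ c d =>
  have hpc := pd_cross G hconn hbl _ c d p hp hpn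
  have hpa := pd_cross G hconn hbl s(c, d) a b p (by rw [Set.pair_comm]; exact hp) hpn
  have hqc := pd_cross G hconn hbl g c d q (by rw [Set.pair_comm]; exact hq) hqn
  have hqa : q a ↔ q b := hq a b he (by simp [hef, heg])
  have key := pd_const G _ (fun x => ¬ (p x ↔ q x)) ?_ hc a b
  · clear hp hq hpn hqn; grind
  · intro x y hxy hs
    simp only [Set.mem_insert_iff, Set.mem_singleton_iff, not_or] at hs
    by_cases h : s(x, y) = s(c, d)
    · rw [Sym2.eq_iff] at h
      rcases h with ⟨rfl, rfl⟩ | ⟨rfl, rfl⟩ <;> (clear hp hq hpn hqn hbl; grind)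
    · have h3 := hp x y hxy (by simp [h, hs.1, hs.2])
      have h4 := hq x y hxy (by simp [h, hs.1, hs.2])
      rw [h3, h4]

/-- Every pairwise-disconnecting set of a finite connected bridgeless simple graph is
contained in a unique maximal pairwise-disconnecting set. -/
theorem exists_unique_maximal_pdset {V : Type*} [Fintype V] [DecidableEq V]
    (G : SimpleGraph V) (hconn : G.Connected) (hbl : ∀ e : Sym2 V, ¬ G.IsBridge e)
    (S : Finset (Sym2 V)) (hS : IsPDSet G S) :
    ∃! S_M : Finset (Sym2 V), IsMaxPDSet G S_M ∧ S ⊆ S_M := by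
  classical
  obtain ⟨e₀, he₀⟩ : S.Nonempty := by
    rw [← Finset.card_pos]; have := hS.2.1; omega
  set M : Finset (Sym2 V) := Finset.univ.filter
    (fun g => g ∈ G.edgeSet ∧ (g ≠ e₀ → ¬ (G.deleteEdges {e₀, g}).Connected)) with hM
  have hsub : ∀ T, IsPDSet G T → S ⊆ T → T ⊆ M := by
    intro T hT hST g hg
    simp only [hM, Finset.mem_filter, Finset.mem_univ, true_and]
    exact ⟨hT.1 hg, fun hne => hT.2.2 _ (hST he₀) _ hg hne.symm⟩
  have hSM : S ⊆ M := hsub S hS (Finset.Subset.refl _)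
  have hMP : IsPDSet G M := by
    refine ⟨?_, hS.2.1.trans (Finset.card_le_card hSM), ?_⟩
    · intro g hg
      simp only [hM, Finset.coe_filter, Finset.mem_univ, true_and, Set.mem_setOf_eq] at hg
      exact hg.1
    · intro e he f hf hne
      simp only [hM, Finset.mem_filter, Finset.mem_univ, true_and] at he hf
      by_cases h1 : e = e₀
      · subst h1; exact hf.2 hne.symm
      by_cases h2 : f = e₀
      · subst h2; rw [Set.pair_comm]; exact he.2 hne
      refine pd_trans G hconn hbl e e₀ f he.1 h1 hne ?_ (hf.2 h2)
      rw [Set.pair_comm]; exact he.2 h1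
  refine ⟨M, ⟨⟨hMP, fun T hT hMT => ?_⟩, hSM⟩, ?_⟩
  · exact Finset.Subset.antisymm (hsub T hT (hSM.trans hMT)) hMT
  · rintro T ⟨hT, hST⟩
    exact (hT.2 M hMP (hsub T hT.1 hST)).symm
end

section
/- Let G be a finite connected bridgeless simple graph, let S be a pairwise-disconnecting set of G, and let e ∈ S. Then the set S_M(e), defined as the union of {e} and the set of all bridges of G − e, is a maximal pairwise-disconnecting set of G containing S. -/
open LaurentPolynomial Finset

open scoped Classical in
/-- `SMfin G e` is the union of `{e}` and the set of all bridges of `G - e`. -/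
noncomputable def SMfin {V : Type*} [Fintype V] [DecidableEq V] (G : SimpleGraph V)
    (e : Sym2 V) : Finset (Sym2 V) :=
  insert e (Finset.univ.filter fun f => (G.deleteEdges {e}).IsBridge f)


/-- In a connected bridgeless graph, `f` is a bridge of `G - e` iff `G - {e, f}` is
disconnected. -/
lemma isBridge_iff_pd {V : Type*} (G : SimpleGraph V) (hconn : G.Connected)
    (hbl : ∀ g : Sym2 V, ¬ G.IsBridge g) (e f : Sym2 V) :
    (G.deleteEdges {e}).IsBridge f ↔ ¬ (G.deleteEdges {e, f}).Connected := by
  have h1 : (G.deleteEdges {e}).Connected := by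
    induction e with
    | h a b => exact hconn.connected_delete_edge_of_not_isBridge (hbl _)
  have h2 : G.deleteEdges {e, f} = (G.deleteEdges {e}).deleteEdges {f} := by
    rw [SimpleGraph.deleteEdges_deleteEdges]; rfl
  rw [h2]
  induction f with
  | h a b =>
    constructor
    · intro h hc
      exact SimpleGraph.isBridge_iff.mp h (hc.preconnected a b)
    · intro h
      by_contra hb
      exact h (h1.connected_delete_edge_of_not_isBridge hb)

lemma isBridge_del_symm {V : Type*} (G : SimpleGraph V) (hconn : G.Connected)
    (hbl : ∀ g : Sym2 V, ¬ G.IsBridge g) {e f : Sym2 V}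
    (h : (G.deleteEdges {e}).IsBridge f) : (G.deleteEdges {f}).IsBridge e := by
  rw [isBridge_iff_pd G hconn hbl] at h ⊢
  rwa [Set.pair_comm]

lemma isBridge_del_mem {V : Type*} (G : SimpleGraph V) (hconn : G.Connected)
    (hbl : ∀ g : Sym2 V, ¬ G.IsBridge g) {e f : Sym2 V}
    (h : (G.deleteEdges {e}).IsBridge f) : f ∈ G.edgeSet := by
  have h1 : (G.deleteEdges {e}).Connected := by
    induction e with
    | h a b => exact hconn.connected_delete_edge_of_not_isBridge (hbl _)
  induction f with
  | h a b =>
    exact SimpleGraph.deleteEdges_le _ (h.reachable_iff_adj.mp (h1.preconnected a b))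

/-- Transitivity, via cycles. -/
lemma isBridge_del_trans {V : Type*} (G : SimpleGraph V) {e f g : Sym2 V}
    (hf : f ∈ G.edgeSet) (hfg : f ≠ g)
    (hef : (G.deleteEdges {e}).IsBridge f) (hge : (G.deleteEdges {g}).IsBridge e) :
    (G.deleteEdges {g}).IsBridge f := by
  rw [SimpleGraph.isBridge_iff_forall_cycle_notMem (by simp [hf, hfg])]
  intro u p hp hfp
  have hep : e ∉ p.edges := hge.notMem_edges_of_isCycle hp
  have ht : ∀ x ∈ p.edges, x ∈ (G.deleteEdges {e}).edgeSet := by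
    intro x hx
    have := p.edges_subset_edgeSet hx
    rw [SimpleGraph.edgeSet_deleteEdges] at this ⊢
    exact ⟨this.1, fun h => hep (h ▸ hx)⟩
  exact hef.notMem_edges_of_isCycle (hp.transfer ht)
    (by rwa [SimpleGraph.Walk.edges_transfer])

lemma mem_SMfin {V : Type*} [Fintype V] [DecidableEq V] (G : SimpleGraph V) (e f : Sym2 V) :
    f ∈ SMfin G e ↔ f = e ∨ (G.deleteEdges {e}).IsBridge f := by
  simp [SMfin]

/-- For a pairwise-disconnecting set `S` of a finite connected bridgeless simple graph `G`
and `e ∈ S`, the set `S_M(e)` (the union of `{e}` and the bridges of `G - e`) is a maximal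
pairwise-disconnecting set of `G` containing `S`. -/
theorem SMfin_isMaxPDSet {V : Type*} [Fintype V] [DecidableEq V]
    (G : SimpleGraph V) (hconn : G.Connected) (hbl : ∀ g : Sym2 V, ¬ G.IsBridge g)
    (S : Finset (Sym2 V)) (hS : IsPDSet G S) (e : Sym2 V) (he : e ∈ S) :
    IsMaxPDSet G (SMfin G e) ∧ S ⊆ SMfin G e := by
  have key : ∀ T : Finset (Sym2 V), IsPDSet G T → e ∈ T → T ⊆ SMfin G e := by
    intro T hT heT f hf
    rw [mem_SMfin]
    by_cases hfe : f = e
    · exact Or.inl hfe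
    · exact Or.inr ((isBridge_iff_pd G hconn hbl e f).mpr (hT.2.2 e heT f hf (Ne.symm hfe)))
  have hsub := key S hS he
  refine ⟨⟨⟨?_, hS.2.1.trans (Finset.card_le_card hsub), ?_⟩, ?_⟩, hsub⟩
  · intro f hf
    rcases (mem_SMfin G e f).mp hf with rfl | h
    · exact hS.1 he
    · exact isBridge_del_mem G hconn hbl h
  · intro f hf g hg hfg
    rw [← isBridge_iff_pd G hconn hbl]
    rcases (mem_SMfin G e f).mp hf with rfl | h
    · rcases (mem_SMfin G f g).mp hg with rfl | h'
      · exact absurd rfl hfg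
      · exact h'
    · rcases (mem_SMfin G e g).mp hg with rfl | h'
      · exact isBridge_del_symm G hconn hbl h
      · exact isBridge_del_trans G (isBridge_del_mem G hconn hbl h') hfg.symm h'
          (isBridge_del_symm G hconn hbl h)
  · intro T hT hsT
    exact Finset.Subset.antisymm (key T hT (hsT ((mem_SMfin G e e).mpr (Or.inl rfl)))) hsT
end

section
/- Let G be a finite connected bridgeless simple graph. If S¹ and S² are two distinct maximal pairwise-disconnecting sets of G, then S¹ ∩ S² = ∅. -/
open LaurentPolynomial Finset

lemma const_of_reachable {V : Type*} {H : SimpleGraph V} (c : V → Prop)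
    (h : ∀ x y, H.Adj x y → (c x ↔ c y)) {u v : V} (huv : H.Reachable u v) : c u ↔ c v := by
  obtain ⟨p⟩ := huv
  induction p with
  | nil => rfl
  | cons hadj _ ih => exact (h _ _ hadj).trans ih

lemma delete_one_reachable {V : Type*} {G : SimpleGraph V} (hconn : G.Connected)
    (hbl : ∀ e : Sym2 V, ¬ G.IsBridge e) (f : Sym2 V) (u v : V) :
    (G.deleteEdges {f}).Reachable u v := by
  have h : (G.deleteEdges {f}).Connected := by
    induction f with
    | h x y => exact hconn.connected_delete_edge_of_not_isBridge (hbl _)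
  exact h.preconnected u v

lemma exists_cut {V : Type*} {G : SimpleGraph V} (hconn : G.Connected)
    (hbl : ∀ e : Sym2 V, ¬ G.IsBridge e) {e f : Sym2 V}
    (h : ¬ (G.deleteEdges {e, f}).Connected) :
    ∃ c : V → Prop, ∀ x y, G.Adj x y → (¬ (c x ↔ c y) ↔ (s(x, y) = e ∨ s(x, y) = f)) := by
  have hn := hconn.nonempty
  have h' : ¬ (G.deleteEdges {e, f}).Preconnected := fun hp => h ⟨hp⟩
  simp only [SimpleGraph.Preconnected, not_forall] at h'
  obtain ⟨u, v, huv⟩ := h'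
  have key : ∀ x y, G.Adj x y → ¬ (s(x, y) = e ∨ s(x, y) = f) →
      ((G.deleteEdges {e, f}).Reachable u x ↔ (G.deleteEdges {e, f}).Reachable u y) := by
    intro x y hxy hne
    have ha : (G.deleteEdges {e, f}).Adj x y := by
      rw [SimpleGraph.deleteEdges_adj]
      exact ⟨hxy, by simpa using hne⟩
    exact ⟨fun hr => hr.trans ha.reachable, fun hr => hr.trans ha.symm.reachable⟩
  have contra : ∀ g : Sym2 V, (∀ x y, (G.deleteEdges {g}).Adj x y →
      ((G.deleteEdges {e, f}).Reachable u x ↔ (G.deleteEdges {e, f}).Reachable u y)) → False :=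
    fun g hg => huv ((const_of_reachable _ hg (delete_one_reachable hconn hbl g u v)).1 .rfl)
  refine ⟨fun x => (G.deleteEdges {e, f}).Reachable u x, fun x y hxy => ⟨?_, ?_⟩⟩
  · intro hc
    by_contra hne
    exact hc (key x y hxy hne)
  · intro hef hc
    have same : ∀ a b, s(a, b) = s(x, y) →
      ((G.deleteEdges {e, f}).Reachable u a ↔ (G.deleteEdges {e, f}).Reachable u b) := by
      intro a b hab
      rcases Sym2.eq_iff.1 hab with ⟨rfl, rfl⟩ | ⟨rfl, rfl⟩
      · exact hc
      · exact hc.symm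
    rcases hef with he | hf
    · refine contra f fun a b hab => ?_
      rw [SimpleGraph.deleteEdges_adj] at hab
      by_cases h1 : s(a, b) = e
      · exact same a b (h1.trans he.symm)
      · exact key a b hab.1 (by simpa [h1] using hab.2)
    · refine contra e fun a b hab => ?_
      rw [SimpleGraph.deleteEdges_adj] at hab
      by_cases h1 : s(a, b) = f
      · exact same a b (h1.trans hf.symm)
      · exact key a b hab.1 (by simpa [h1] using hab.2)

lemma disc_trans {V : Type*} {G : SimpleGraph V} (hconn : G.Connected)
    (hbl : ∀ e : Sym2 V, ¬ G.IsBridge e) {e f g : Sym2 V} (he : e ∈ G.edgeSet)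
    (hef : e ≠ f) (heg : e ≠ g)
    (h1 : ¬ (G.deleteEdges {e, f}).Connected) (h2 : ¬ (G.deleteEdges {f, g}).Connected) :
    ¬ (G.deleteEdges {e, g}).Connected := by
  obtain ⟨c, hc⟩ := exists_cut hconn hbl h1
  obtain ⟨d, hd⟩ := exists_cut hconn hbl h2
  intro hcon
  induction e with
  | h x y =>
    have hxy : G.Adj x y := he
    have hk := const_of_reachable (H := G.deleteEdges {s(x, y), g}) (fun a => (c a ↔ d a))
      (fun a b hab => by
        rw [SimpleGraph.deleteEdges_adj] at hab
        have hca := hc a b hab.1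
        have hda := hd a b hab.1
        have hn : ¬ (s(a, b) = s(x, y) ∨ s(a, b) = g) := by simpa using hab.2
        tauto) (hcon.preconnected x y)
    have hca := hc x y hxy
    have hda := hd x y hxy
    simp only [true_or, iff_true] at hca
    have : d x ↔ d y := by tauto
    tauto

lemma disc_comm {V : Type*} {G : SimpleGraph V} {e f : Sym2 V}
    (h : ¬ (G.deleteEdges {e, f}).Connected) : ¬ (G.deleteEdges {f, e}).Connected := by
  rwa [Set.pair_comm]

/-- Two distinct maximal pairwise-disconnecting sets of a finite connected bridgeless
simple graph are disjoint. -/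
theorem maximal_pdsets_disjoint {V : Type*} [Fintype V] [DecidableEq V]
    (G : SimpleGraph V) (hconn : G.Connected) (hbl : ∀ e : Sym2 V, ¬ G.IsBridge e)
    (S₁ S₂ : Finset (Sym2 V)) (h₁ : IsMaxPDSet G S₁) (h₂ : IsMaxPDSet G S₂)
    (hne : S₁ ≠ S₂) : S₁ ∩ S₂ = ∅ := by
  by_contra hni
  obtain ⟨s, hs⟩ := Finset.nonempty_iff_ne_empty.2 hni
  obtain ⟨hs1, hs2⟩ := Finset.mem_inter.1 hs
  have mixed : ∀ e ∈ S₁, ∀ f ∈ S₂, e ≠ f → ¬ (G.deleteEdges {e, f}).Connected := by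
    intro e he f hf hef
    by_cases h1 : e = s
    · subst h1
      exact h₂.1.2.2 _ hs2 _ hf hef
    by_cases h2 : s = f
    · subst h2
      exact h₁.1.2.2 _ he _ hs1 hef
    exact disc_trans hconn hbl (h₁.1.1 he) h1 hef (h₁.1.2.2 _ he _ hs1 h1)
      (h₂.1.2.2 _ hs2 _ hf h2)
  have hU : IsPDSet G (S₁ ∪ S₂) := by
    refine ⟨?_, h₁.1.2.1.trans (Finset.card_le_card Finset.subset_union_left), ?_⟩
    · intro e he
      rcases Finset.mem_union.1 he with he | he
      · exact h₁.1.1 he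
      · exact h₂.1.1 he
    · intro e he f hf hef
      rcases Finset.mem_union.1 he with he | he <;> rcases Finset.mem_union.1 hf with hf | hf
      · exact h₁.1.2.2 _ he _ hf hef
      · exact mixed _ he _ hf hef
      · exact disc_comm (mixed _ hf _ he hef.symm)
      · exact h₂.1.2.2 _ he _ hf hef
  exact hne ((h₁.2 _ hU Finset.subset_union_left).symm.trans
    (h₂.2 _ hU Finset.subset_union_right))
end

section
/- Let G be a finite connected bridgeless simple graph with vertex set V and edge set E, and let F ⊆ E. Then |F| − |V| + k(F) = |E| − |V| (where k(F) is the number of connected components of the spanning subgraph (V,F)) if and only if either F = E − {e} for some edge e ∈ E, or F = E − S for some pairwise-disconnecting set S of G. -/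
open LaurentPolynomial Finset

/-- `kComp V F` is the number of connected components of the spanning subgraph `(V, F)`. -/
noncomputable def kComp (V : Type*) [Fintype V] (F : Finset (Sym2 V)) : ℕ :=
  Nat.card (SimpleGraph.fromEdgeSet (↑F : Set (Sym2 V))).ConnectedComponent

theorem reach_cases {V : Type*} (A B : SimpleGraph V) (u v : V)
    (h : ∀ x y, B.Adj x y → A.Adj x y ∨ (x = u ∧ y = v) ∨ (x = v ∧ y = u))
    (x y : V) (hxy : B.Reachable x y) :
    A.Reachable x y ∨ (A.Reachable x u ∧ A.Reachable v y) ∨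
      (A.Reachable x v ∧ A.Reachable u y) := by
  obtain ⟨w⟩ := hxy
  induction w with
  | nil => exact Or.inl (SimpleGraph.Reachable.refl _)
  | @cons a b c hab p ih =>
    rcases h _ _ hab with h1 | ⟨rfl, rfl⟩ | ⟨rfl, rfl⟩
    · have h1 := h1.reachable
      rcases ih with h2 | ⟨h2, h3⟩ | ⟨h2, h3⟩
      · exact Or.inl (h1.trans h2)
      · exact Or.inr (Or.inl ⟨h1.trans h2, h3⟩)
      · exact Or.inr (Or.inr ⟨h1.trans h2, h3⟩)
    · rcases ih with h2 | ⟨h2, h3⟩ | ⟨h2, h3⟩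
      · exact Or.inr (Or.inl ⟨SimpleGraph.Reachable.refl _, h2⟩)
      · exact Or.inr (Or.inl ⟨SimpleGraph.Reachable.refl _, h3⟩)
      · exact Or.inl h3
    · rcases ih with h2 | ⟨h2, h3⟩ | ⟨h2, h3⟩
      · exact Or.inr (Or.inr ⟨SimpleGraph.Reachable.refl _, h2⟩)
      · exact Or.inl h3
      · exact Or.inr (Or.inr ⟨SimpleGraph.Reachable.refl _, h3⟩)

theorem insert_adj {V : Type*} [DecidableEq V] (F : Finset (Sym2 V)) (u v x y : V)
    (h : (SimpleGraph.fromEdgeSet (↑(insert s(u, v) F) : Set (Sym2 V))).Adj x y) :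
    (SimpleGraph.fromEdgeSet (↑F : Set (Sym2 V))).Adj x y ∨
      (x = u ∧ y = v) ∨ (x = v ∧ y = u) := by
  simp at h ⊢
  tauto

theorem fes_mono {V : Type*} {A B : Finset (Sym2 V)} (h : A ⊆ B) :
    SimpleGraph.fromEdgeSet (↑A : Set (Sym2 V)) ≤ SimpleGraph.fromEdgeSet (↑B : Set (Sym2 V)) :=
  SimpleGraph.fromEdgeSet_mono (by exact_mod_cast h)

theorem kComp_le_add_one {V : Type*} [Fintype V] [DecidableEq V] (F : Finset (Sym2 V))
    (e : Sym2 V) : kComp V F ≤ kComp V (insert e F) + 1 := by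
  classical
  induction e with | h u v
  have hle := fes_mono (Finset.subset_insert s(u, v) F)
  unfold kComp
  rw [← Finite.card_option]
  refine Nat.card_le_card_of_injective
    (fun c => if c = SimpleGraph.connectedComponentMk _ u then none
      else some (c.map (SimpleGraph.Hom.ofLE hle))) ?_
  intro c d
  induction c using SimpleGraph.ConnectedComponent.ind with | h x
  induction d using SimpleGraph.ConnectedComponent.ind with | h y
  intro h
  dsimp only at h
  split_ifs at h with h1 h2 h2
  · rw [h1, h2]
  · simp only [Option.some.injEq, SimpleGraph.ConnectedComponent.map_mk] at h
    have h := SimpleGraph.ConnectedComponent.exact h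
    rw [SimpleGraph.ConnectedComponent.eq] at h1 h2 ⊢
    rcases reach_cases _ _ u v (insert_adj F u v) x y h with h | h | h
    · exact h
    · exact absurd h.1 h1
    · exact absurd h.2.symm h2

theorem kComp_reach {V : Type*} [Fintype V] [DecidableEq V] (F : Finset (Sym2 V))
    (u v : V) (huv : (SimpleGraph.fromEdgeSet (↑F : Set (Sym2 V))).Reachable u v) :
    kComp V F ≤ kComp V (insert s(u, v) F) := by
  have hle := fes_mono (Finset.subset_insert s(u, v) F)
  unfold kComp
  refine Nat.card_le_card_of_injective (fun c => c.map (SimpleGraph.Hom.ofLE hle)) ?_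
  intro c d
  induction c using SimpleGraph.ConnectedComponent.ind with | h x
  induction d using SimpleGraph.ConnectedComponent.ind with | h y
  intro h
  have h := SimpleGraph.ConnectedComponent.exact h
  rw [SimpleGraph.ConnectedComponent.eq]
  rcases reach_cases _ _ u v (insert_adj F u v) x y h with h | h | h
  · exact h
  · exact (h.1.trans huv).trans h.2
  · exact (h.1.trans huv.symm).trans h.2

theorem kComp_not_reach {V : Type*} [Fintype V] [DecidableEq V] (F : Finset (Sym2 V))
    (u v : V) (huv : ¬ (SimpleGraph.fromEdgeSet (↑F : Set (Sym2 V))).Reachable u v) :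
    kComp V (insert s(u, v) F) + 1 ≤ kComp V F := by
  classical
  have hle := fes_mono (Finset.subset_insert s(u, v) F)
  have hne : u ≠ v := fun h => huv (h ▸ SimpleGraph.Reachable.refl _)
  unfold kComp
  rw [Nat.card_eq_fintype_card, Nat.card_eq_fintype_card]
  refine Fintype.card_lt_of_surjective_not_injective
    (fun c : (SimpleGraph.fromEdgeSet (↑F : Set (Sym2 V))).ConnectedComponent =>
      c.map (SimpleGraph.Hom.ofLE hle)) ?_ ?_
  · intro c
    induction c using SimpleGraph.ConnectedComponent.ind with | h x
    exact ⟨SimpleGraph.connectedComponentMk _ x, rfl⟩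
  · intro hi
    apply huv
    apply SimpleGraph.ConnectedComponent.exact
    apply hi
    apply SimpleGraph.ConnectedComponent.sound
    apply SimpleGraph.Adj.reachable
    simp [hne]

theorem kComp_super {V : Type*} [Fintype V] [DecidableEq V] {A B : Finset (Sym2 V)}
    (hAB : A ⊆ B) (e : Sym2 V) (h : kComp V (insert e B) < kComp V B) :
    kComp V (insert e A) + 1 ≤ kComp V A := by
  induction e with | h u v
  apply kComp_not_reach
  intro hr
  have := kComp_reach B u v (hr.mono (fes_mono hAB))
  omega

theorem kComp_union {V : Type*} [Fintype V] [DecidableEq V] (F T : Finset (Sym2 V)) :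
    kComp V F ≤ kComp V (T ∪ F) + T.card := by
  induction T using Finset.induction_on with
  | empty => simp
  | insert a T ha ih =>
    have := kComp_le_add_one (T ∪ F) a
    rw [Finset.insert_union, Finset.card_insert_of_notMem ha]
    omega

theorem kComp_pd {V : Type*} [Fintype V] [DecidableEq V] (F T : Finset (Sym2 V)) (hT : T ⊆ F)
    (h : ∀ f ∈ T, kComp V F < kComp V (F.erase f)) :
    kComp V F + T.card ≤ kComp V (F \ T) := by
  induction T using Finset.induction_on with
  | empty => simp
  | insert a T ha ih =>
    have h1 := ih (fun x hx => hT (Finset.mem_insert_of_mem hx))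
      (fun f hf => h f (Finset.mem_insert_of_mem hf))
    have haF : a ∈ F := hT (Finset.mem_insert_self _ _)
    have h2 := h a (Finset.mem_insert_self _ _)
    have h3 := kComp_super (A := F \ insert a T) (B := F.erase a) (by grind) a
      (by rwa [Finset.insert_erase haF])
    have h4 : insert a (F \ insert a T) = F \ T := by grind
    rw [h4] at h3
    rw [Finset.card_insert_of_notMem ha]
    omega

theorem kComp_conn {V : Type*} [Fintype V] [DecidableEq V] [Nonempty V] (F : Finset (Sym2 V)) :
    (SimpleGraph.fromEdgeSet (↑F : Set (Sym2 V))).Connected ↔ kComp V F ≤ 1 := by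
  unfold kComp
  rw [Finite.card_le_one_iff_subsingleton]
  constructor
  · intro h
    exact h.preconnected.subsingleton_connectedComponent
  · intro h
    refine ⟨fun x y => SimpleGraph.ConnectedComponent.exact (Subsingleton.elim _ _)⟩

theorem kComp_pos {V : Type*} [Fintype V] [Nonempty V] (F : Finset (Sym2 V)) :
    1 ≤ kComp V F := Nat.card_pos

/-- For a finite connected bridgeless simple graph `G` and `F ⊆ E`, the nullity of `(V, F)`
equals `|E| - |V|` iff `F = E - {e}` for some edge `e`, or `F = E - S` for some
pairwise-disconnecting set `S` of `G`. -/
theorem nullity_eq_iff {V : Type*} [Fintype V] [DecidableEq V]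
    (G : SimpleGraph V) [DecidableRel G.Adj]
    (hconn : G.Connected) (hbl : ∀ e : Sym2 V, ¬ G.IsBridge e)
    (F : Finset (Sym2 V)) (hF : F ⊆ G.edgeFinset) :
    (F.card : ℤ) - (Fintype.card V : ℤ) + (kComp V F : ℤ) =
        (G.edgeFinset.card : ℤ) - (Fintype.card V : ℤ) ↔
      (∃ e ∈ G.edgeFinset, F = G.edgeFinset.erase e) ∨
        (∃ S : Finset (Sym2 V), IsPDSet G S ∧ F = G.edgeFinset \ S) := by
  haveI := hconn.nonempty
  have hE1 : kComp V G.edgeFinset ≤ 1 := by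
    rw [← kComp_conn]; simpa using hconn
  have hdel : ∀ S : Finset (Sym2 V), G.deleteEdges (↑S : Set (Sym2 V)) =
      SimpleGraph.fromEdgeSet (↑(G.edgeFinset \ S) : Set (Sym2 V)) := by
    intro S
    ext x y
    simp only [SimpleGraph.deleteEdges_adj, SimpleGraph.fromEdgeSet_adj, Finset.coe_sdiff,
      SimpleGraph.coe_edgeFinset, Set.mem_diff, SimpleGraph.mem_edgeSet]
    have := @SimpleGraph.Adj.ne V G x y
    tauto
  have herase : ∀ e, kComp V (G.edgeFinset.erase e) = 1 := by
    intro e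
    refine le_antisymm ?_ (kComp_pos _)
    by_cases he : e ∈ G.edgeFinset
    · have hb := hbl e
      induction e with | h u v
      rw [SimpleGraph.isBridge_iff, not_not] at hb
      have h2 := hdel {s(u, v)}
      rw [Finset.coe_singleton] at h2
      rw [h2] at hb
      have h3 := kComp_reach _ u v hb
      rw [Finset.sdiff_singleton_eq_erase, Finset.insert_erase he] at h3
      omega
    · rwa [Finset.erase_eq_of_notMem he]
  have hpair : ∀ e f, ¬ (G.deleteEdges {e, f}).Connected ↔
      1 < kComp V ((G.edgeFinset.erase e).erase f) := by
    intro e f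
    have h2 := hdel {e, f}
    rw [Finset.coe_pair] at h2
    rw [h2, kComp_conn, not_le]
    have : G.edgeFinset \ {e, f} = (G.edgeFinset.erase e).erase f := by grind
    rw [this]
  constructor
  · intro h
    have hcard := Finset.card_sdiff_add_card_eq_card hF
    have hk : kComp V F = (G.edgeFinset \ F).card := by omega
    have hpos := kComp_pos F
    rcases Nat.lt_or_ge 1 (G.edgeFinset \ F).card with h2 | h2
    · right
      refine ⟨G.edgeFinset \ F, ⟨?_, h2, ?_⟩, ?_⟩
      · intro x hx
        have hx : x ∈ G.edgeFinset \ F := hx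
        exact SimpleGraph.mem_edgeFinset.1 (Finset.mem_sdiff.1 hx).1
      · intro e he f hf hef
        rw [hpair]
        have h3 := kComp_union F (((G.edgeFinset \ F).erase e).erase f)
        have h4 : ((G.edgeFinset \ F).erase e).erase f ∪ F =
            (G.edgeFinset.erase e).erase f := by grind
        have h5 : f ∈ (G.edgeFinset \ F).erase e := Finset.mem_erase.2 ⟨hef.symm, hf⟩
        rw [h4, Finset.card_erase_of_mem h5, Finset.card_erase_of_mem he] at h3
        omega
      · rw [Finset.sdiff_sdiff_eq_self hF]
    · left
      obtain ⟨e, he⟩ := Finset.card_eq_one.1 (show (G.edgeFinset \ F).card = 1 by omega)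
      have h6 : e ∈ G.edgeFinset \ F := by rw [he]; simp
      refine ⟨e, (Finset.mem_sdiff.1 h6).1, ?_⟩
      rw [← Finset.sdiff_singleton_eq_erase, ← he, Finset.sdiff_sdiff_eq_self hF]
  · rintro (⟨e, he, rfl⟩ | ⟨S, ⟨hS, h2, hp⟩, rfl⟩)
    · rw [herase]
      have := Finset.card_erase_add_one he
      push_cast
      omega
    · have hS' : S ⊆ G.edgeFinset := fun x hx => SimpleGraph.mem_edgeFinset.2 (hS hx)
      obtain ⟨e, he⟩ := Finset.card_pos.1 (show 0 < S.card by omega)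
      have h7 := kComp_pd (G.edgeFinset.erase e) (S.erase e) (Finset.erase_subset_erase _ hS') (by
        intro f hf
        rw [herase]
        exact (hpair e f).1 (hp e he f (Finset.mem_of_mem_erase hf) (Finset.ne_of_mem_erase hf).symm))
      have h8 := kComp_union (G.edgeFinset \ S) (S.erase e)
      have h9 : S.erase e ∪ (G.edgeFinset \ S) = G.edgeFinset.erase e := by grind
      have h10 : G.edgeFinset.erase e \ S.erase e = G.edgeFinset \ S := by grind
      rw [h9, herase] at h8
      rw [h10, herase] at h7
      have h11 := Finset.card_erase_add_one he
      have hcard := Finset.card_sdiff_add_card_eq_card hS'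
      omega
end

section
/- Let G be a finite connected bridgeless simple graph and let e be an edge of G with endpoints u and v. If the graph G − e obtained by deleting e has a bridge, then u and v have at most one common neighbor in G, i.e., |N(u) ∩ N(v)| ≤ 1. -/
open Finset

/-- Let `G` be a finite connected bridgeless simple graph and let `e = s(u,v)` be an edge
of `G`. If `G - e` has a bridge, then `u` and `v` have at most one common neighbor. -/
theorem common_neighbors_le_one_of_bridge {V : Type*} [Fintype V] [DecidableEq V]
    (G : SimpleGraph V) [DecidableRel G.Adj]
    (hconn : G.Connected) (hbl : ∀ g : Sym2 V, ¬ G.IsBridge g)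
    (u v : V) (hadj : G.Adj u v)
    (hbridge : ∃ f : Sym2 V, (G.deleteEdges {s(u, v)}).IsBridge f) :
    (G.neighborFinset u ∩ G.neighborFinset v).card ≤ 1 := by
  obtain ⟨f, hf⟩ := hbridge
  rw [Finset.card_le_one]
  intro w hw w' hw'
  simp only [Finset.mem_inter, SimpleGraph.mem_neighborFinset] at hw hw'
  by_contra hne
  induction f with | h a b
  have hg := hbl s(a, b)
  rw [SimpleGraph.isBridge_iff] at hf hg
  rw [not_not] at hg
  apply hf
  set H := (G.deleteEdges {s(u, v)}).deleteEdges {s(a, b)} with hH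
  have hHadj : ∀ x y, H.Adj x y ↔ (G.Adj x y ∧ s(x, y) ≠ s(u, v)) ∧ s(x, y) ≠ s(a, b) := by
    intro x y
    simp only [hH, SimpleGraph.deleteEdges_adj, Set.mem_singleton_iff, ne_eq]
  -- a path through a common neighbour whose two edges both avoid `f`
  have key : ∀ z, G.Adj u z → G.Adj v z → s(u, z) ≠ s(a, b) → s(v, z) ≠ s(a, b) →
      H.Reachable u v := by
    intro z h1 h2 h3 h4
    have e1 : H.Adj u z := (hHadj _ _).2 ⟨⟨h1, by
      have := h2.ne
      have := h1.ne
      simp only [ne_eq, Sym2.eq_iff]; grind⟩, h3⟩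
    have e2 : H.Adj v z := (hHadj _ _).2 ⟨⟨h2, by
      have := h2.ne
      have := h1.ne
      simp only [ne_eq, Sym2.eq_iff]; grind⟩, h4⟩
    exact e1.reachable.trans e2.symm.reachable
  have huv : H.Reachable u v := by
    have n1 := hw.1.ne
    have n2 := hw.2.ne
    have n3 := hw'.1.ne
    have n4 := hw'.2.ne
    by_cases c : s(u, w) ≠ s(a, b) ∧ s(v, w) ≠ s(a, b)
    · exact key w hw.1 hw.2 c.1 c.2
    · apply key w' hw'.1 hw'.2 <;>
      · simp only [ne_eq, Sym2.eq_iff] at c ⊢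
        grind
  have step : ∀ x y, (G.deleteEdges {s(a, b)}).Walk x y → H.Reachable x y := by
    intro x y p
    induction p with
    | nil => exact SimpleGraph.Reachable.refl _
    | @cons x y z h p ih =>
      refine SimpleGraph.Reachable.trans ?_ ih
      simp only [SimpleGraph.deleteEdges_adj, Set.mem_singleton_iff] at h
      by_cases c : s(x, y) = s(u, v)
      · rw [Sym2.eq_iff] at c
        rcases c with ⟨rfl, rfl⟩ | ⟨rfl, rfl⟩
        · exact huv
        · exact huv.symm
      · exact ((hHadj x y).2 ⟨⟨h.1, c⟩, h.2⟩).reachable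
  obtain ⟨p⟩ := hg
  exact step a b p
end
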